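/- The set of self-homeomorphisms of C × C admitting a pair prefix local rule is a subgroup of the homeomorphism group of C × C: it contains the identity, and if f and g each admit a pair prefix local rule then so do f ∘ g and f⁻¹. -/

import Mathlib

/-- Cantor space: sequences of binary digits (`false` = 0, `true` = 1). -/
abbrev C : Type := ℕ → Bool

/-- `wordApp u x` is the element of Cantor space beginning with the finite word `u`
and continuing with `x`. -/
def wordApp (u : List Bool) (x : C) : C := fun i => u.getD i (x (i - u.length))

/-- The language `L`: finite binary words that are empty or end in the digit 1. -/
def InL (w : List Bool) : Prop := w = [] ∨ ∃ v : List Bool, w = v ++ [true]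

/-- `X₀`: the set of finitely supported sequences. -/
def X0 : Set C := {x | {i : ℕ | x i = true}.Finite}

/-- `φ(w) = w ++ 0^∞`. -/
def phi (w : List Bool) : C := wordApp w (fun _ => false)

/-- Membership in Thompson's group `V`: a self-homeomorphism of Cantor space
admitting a prefix local rule. -/
def IsVElem (f : C ≃ₜ C) : Prop :=
  ∃ (n : ℕ) (F : List Bool → List Bool),
    ∀ u : List Bool, u.length = n → ∀ x : C, f (wordApp u x) = wordApp (F u) x

/-- Membership in the Brin–Thompson group `2V`: a self-homeomorphism of `C × C`
admitting a pair prefix local rule. -/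
def Is2VElem (f : (C × C) ≃ₜ (C × C)) : Prop :=
  ∃ (n : ℕ) (F1 F2 : List Bool → List Bool → List Bool),
    ∀ u v : List Bool, u.length = n → v.length = n →
      ∀ x y : C, f (wordApp u x, wordApp v y) = (wordApp (F1 u v) x, wordApp (F2 u v) y)

theorem wordApp_append (u v : List Bool) (x : C) :
    wordApp (u ++ v) x = wordApp u (wordApp v x) := by
  funext i
  simp only [wordApp, List.getD_eq_getElem?_getD, List.length_append]
  by_cases h : i < u.length
  · rw [List.getElem?_append_left h]
    simp [List.getElem?_eq_getElem h]
  · rw [List.getElem?_append_right (by omega)]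
    rw [List.getElem?_eq_none (l := u) (by omega)]
    simp [Nat.sub_sub]

theorem wordApp_split (n : ℕ) (x : C) :
    ∃ a : List Bool, a.length = n ∧ ∃ y : C, x = wordApp a y := by
  refine ⟨List.ofFn (fun i : Fin n => x i), by simp, fun i => x (i + n), ?_⟩
  funext i
  simp only [wordApp, List.getD_eq_getElem?_getD, List.length_ofFn]
  by_cases h : i < n
  · simp [h]
  · rw [List.getElem?_eq_none (by simpa using h)]
    simp [Nat.sub_add_cancel (not_lt.mp h)]

theorem wordApp_prefix (u w : List Bool) (x y : C) (h : wordApp u x = wordApp w y)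
    (hl : w.length ≤ u.length) : ∃ r, u = w ++ r := by
  have : w <+: u := by
    rw [List.prefix_iff_getElem]
    refine ⟨hl, fun i hi => ?_⟩
    have := congrFun h i
    simp only [wordApp, List.getD_eq_getElem?_getD] at this
    rw [List.getElem?_eq_getElem hi, List.getElem?_eq_getElem (by omega)] at this
    simpa using this.symm
  obtain ⟨r, hr⟩ := this
  exact ⟨r, hr.symm⟩

theorem is2V_of_exists (f : (C × C) ≃ₜ (C × C)) (n : ℕ)
    (h : ∀ u v : List Bool, u.length = n → v.length = n → ∃ p q : List Bool,
      ∀ x y : C, f (wordApp u x, wordApp v y) = (wordApp p x, wordApp q y)) :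
    Is2VElem f := by
  have h' : ∀ u v : List Bool, ∃ p q : List Bool, u.length = n → v.length = n →
      ∀ x y : C, f (wordApp u x, wordApp v y) = (wordApp p x, wordApp q y) := by
    intro u v
    by_cases hu : u.length = n ∧ v.length = n
    · obtain ⟨p, q, hpq⟩ := h u v hu.1 hu.2
      exact ⟨p, q, fun _ _ => hpq⟩
    · exact ⟨[], [], fun a b => absurd ⟨a, b⟩ hu⟩
  choose F1 F2 hF using h'
  exact ⟨n, F1, F2, hF⟩

theorem exists_len_bound (n : ℕ) (F : List Bool → List Bool → List Bool) :
    ∃ N : ℕ, ∀ u v : List Bool, u.length = n → v.length = n → (F u v).length ≤ N := by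
  have hfin : ({l : List Bool | l.length = n} ×ˢ {l : List Bool | l.length = n}).Finite :=
    (List.finite_length_eq Bool n).prod (List.finite_length_eq Bool n)
  obtain ⟨N, hN⟩ := (hfin.image (fun p => (F p.1 p.2).length)).bddAbove
  exact ⟨N, fun u v hu hv => hN ⟨(u, v), ⟨hu, hv⟩, rfl⟩⟩

theorem is2V_trans (f g : (C × C) ≃ₜ (C × C)) (hf : Is2VElem f) (hg : Is2VElem g) :
    Is2VElem (g.trans f) := by
  obtain ⟨m, F1, F2, hF⟩ := hf
  obtain ⟨n, G1, G2, hG⟩ := hg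
  refine is2V_of_exists _ (n + m) fun u v hu hv => ?_
  let p := G1 (u.take n) (v.take n) ++ u.drop n
  let q := G2 (u.take n) (v.take n) ++ v.drop n
  have hp : (p.take m).length = m := by simp [p]; omega
  have hq : (q.take m).length = m := by simp [q]; omega
  refine ⟨F1 (p.take m) (q.take m) ++ p.drop m, F2 (p.take m) (q.take m) ++ q.drop m,
    fun x y => ?_⟩
  have h1 : g (wordApp u x, wordApp v y) = (wordApp p x, wordApp q y) := by
    have := hG (u.take n) (v.take n) (by simp; omega) (by simp; omega)
      (wordApp (u.drop n) x) (wordApp (v.drop n) y)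
    simpa only [← wordApp_append, List.take_append_drop] using this
  have h2 := hF (p.take m) (q.take m) hp hq (wordApp (p.drop m) x) (wordApp (q.drop m) y)
  rw [Homeomorph.trans_apply, h1]
  simpa only [← wordApp_append, List.take_append_drop] using h2

theorem is2V_symm (f : (C × C) ≃ₜ (C × C)) (hf : Is2VElem f) : Is2VElem f.symm := by
  obtain ⟨n, F1, F2, hF⟩ := hf
  obtain ⟨N1, hN1⟩ := exists_len_bound n F1
  obtain ⟨N2, hN2⟩ := exists_len_bound n F2
  refine is2V_of_exists _ (max N1 N2) fun u v hu hv => ?_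
  obtain ⟨⟨s, t⟩, hst⟩ := f.surjective (wordApp u (fun _ => false), wordApp v (fun _ => false))
  obtain ⟨a, ha, s', rfl⟩ := wordApp_split n s
  obtain ⟨b, hb, t', rfl⟩ := wordApp_split n t
  rw [hF a b ha hb, Prod.mk.injEq] at hst
  obtain ⟨r, hr⟩ := wordApp_prefix u _ _ _ hst.1.symm
    (by rw [hu]; exact (hN1 a b ha hb).trans (le_max_left _ _))
  obtain ⟨w, hw⟩ := wordApp_prefix v _ _ _ hst.2.symm
    (by rw [hv]; exact (hN2 a b ha hb).trans (le_max_right _ _))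
  refine ⟨a ++ r, b ++ w, fun x y => ?_⟩
  rw [Homeomorph.symm_apply_eq, wordApp_append, wordApp_append, hF a b ha hb,
    ← wordApp_append, ← wordApp_append, ← hr, ← hw]

/-- The self-homeomorphisms of `C × C` admitting a pair prefix local rule form a
subgroup of the homeomorphism group of `C × C`: the identity admits one, and if `f`
and `g` do, then so do `f ∘ g` (which is `g.trans f`) and `f⁻¹`. -/
theorem twoV_is_subgroup :
    Is2VElem (Homeomorph.refl (C × C)) ∧
    (∀ f g : (C × C) ≃ₜ (C × C), Is2VElem f → Is2VElem g → Is2VElem (g.trans f)) ∧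
    (∀ f : (C × C) ≃ₜ (C × C), Is2VElem f → Is2VElem f.symm) := by
  exact ⟨⟨0, fun u _ => u, fun _ v => v, fun _ _ _ _ _ _ => rfl⟩, is2V_trans, is2V_symm⟩
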